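/- Let I ⊆ ℝ be a nondegenerate interval, n ∈ ℕ, let ω = (ω_1,…,ω_n) be an n-dimensional positive Chebyshev system over I, and let ω_{n+1} : I → ℝ be such that ω* = (ω_1,…,ω_n,ω_{n+1}) is an (n+1)-dimensional positive Chebyshev system over I. Let f : I → ℝ. Then, for every x, y ∈ I with x < y, there exists p ∈ [x,y] such that [x, ((n−1)x+y)/n, ((n−2)x+2y)/n, …, (x+(n−1)y)/n, y; f]_{ω*} ≥ D̲_{(𝟏_n,ω*)} f(p). -/

import Mathlib

/-- `Phi ω x` is the determinant `det(ωᵢ(xⱼ))` of an `n`-tuple of functions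
evaluated at an `n`-tuple of points. -/
noncomputable def Phi {n : ℕ} (ω : Fin n → ℝ → ℝ) (x : Fin n → ℝ) : ℝ :=
  (Matrix.of fun i j => ω i (x j)).det

/-- `ω` is an `n`-dimensional positive Chebyshev system over `H`:
`Phi ω` is positive on all strictly increasing `n`-tuples of elements of `H`. -/
def IsPosChebyshev {n : ℕ} (ω : Fin n → ℝ → ℝ) (H : Set ℝ) : Prop :=
  ∀ x : Fin n → ℝ, StrictMono x → (∀ j, x j ∈ H) → 0 < Phi ω x

/-- The generalized `ω*`-divided difference `[x₀,…,xₙ; f]_{ω*}`, where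
`ω* = (ω₁,…,ωₙ,ω')`:  `Φ_{(ω,f)}(x) / Φ_{ω*}(x)`. -/
noncomputable def divDiff {n : ℕ} (ω : Fin n → ℝ → ℝ) (ω' : ℝ → ℝ) (f : ℝ → ℝ)
    (x : Fin (n + 1) → ℝ) : ℝ :=
  Phi (Fin.snoc ω f) x / Phi (Fin.snoc ω ω') x

/-- The partial sum `t₁ + ⋯ + tⱼ` (empty for `j = 0`, everything for `j = n`). -/
noncomputable def psum {n : ℕ} (t : Fin n → ℝ) (j : Fin (n + 1)) : ℝ :=
  ∑ i ∈ Finset.univ.filter (fun i : Fin n => (i : ℕ) < (j : ℕ)), t i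

/-- `f` is `(t,ω)`-convex on `J`:
`Φ_{(ω,f)}(x, x+t₁h, x+(t₁+t₂)h, …, x+(t₁+⋯+tₙ)h) ≥ 0`
for all `x ∈ J` and `h > 0` with `x+(t₁+⋯+tₙ)h ∈ J`. -/
def TOmegaConvexOn {n : ℕ} (ω : Fin n → ℝ → ℝ) (t : Fin n → ℝ) (J : Set ℝ) (f : ℝ → ℝ) : Prop :=
  ∀ x ∈ J, ∀ h : ℝ, 0 < h → x + psum t (Fin.last n) * h ∈ J →
    0 ≤ Phi (Fin.snoc ω f) (fun j => x + psum t j * h)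

/-- The tuple `x, ((T−s₁)x+s₁y)/T, …, ((T−s_{n−1})x+s_{n−1}y)/T, y`
where `sⱼ = t₁+⋯+tⱼ` and `T = sₙ`. -/
noncomputable def jpts {n : ℕ} (t : Fin n → ℝ) (x y : ℝ) : Fin (n + 1) → ℝ :=
  fun j => ((psum t (Fin.last n) - psum t j) * x + psum t j * y) / psum t (Fin.last n)

/-- The lower Dinghas type derivative `D̲_{(t,ω*)} f(p)`: the limit, as `δ → 0⁺`, of
the infimum of `[x, ((T−s₁)x+s₁y)/T, …, y; f]_{ω*}` over `x,y ∈ I` with `x < y`,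
`x ≤ p ≤ y`, `y − x < δ`; realized as a `liminf` (with values in `EReal`). -/
noncomputable def dinghasT {n : ℕ} (ω : Fin n → ℝ → ℝ) (ω' : ℝ → ℝ) (t : Fin n → ℝ)
    (f : ℝ → ℝ) (I : Set ℝ) (p : ℝ) : EReal :=
  Filter.liminf (fun q : ℝ × ℝ => (divDiff ω ω' f (jpts t q.1 q.2) : EReal))
    (⨅ δ ∈ Set.Ioi (0 : ℝ), Filter.principal
      {q : ℝ × ℝ | q.1 ∈ I ∧ q.2 ∈ I ∧ q.1 < q.2 ∧ q.1 ≤ p ∧ p ≤ q.2 ∧ q.2 - q.1 < δ})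

theorem Phi_snoc_expand {n : ℕ} (ω : Fin n → ℝ → ℝ) (g : ℝ → ℝ) (z : Fin (n + 1) → ℝ) :
    Phi (Fin.snoc ω g) z =
      ∑ j : Fin (n + 1), (-1) ^ (n + (j : ℕ)) * g (z j) * Phi ω (fun i => z (j.succAbove i)) := by
  unfold Phi
  rw [Matrix.det_succ_row _ (Fin.last n)]
  refine Finset.sum_congr rfl fun j _ => ?_
  have h : (Matrix.of fun i j => (Fin.snoc ω g : Fin (n + 1) → ℝ → ℝ) i (z j)).submatrix
      (Fin.last n).succAbove j.succAbove = Matrix.of fun i l => ω i (z (j.succAbove l)) := by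
    ext a b
    simp
  rw [h]
  simp

theorem Phi_snoc_sub {n : ℕ} (ω : Fin n → ℝ → ℝ) (f g : ℝ → ℝ) (c : ℝ) (z : Fin (n + 1) → ℝ) :
    Phi (Fin.snoc ω (fun t => f t - c * g t)) z =
      Phi (Fin.snoc ω f) z - c * Phi (Fin.snoc ω g) z := by
  simp only [Phi_snoc_expand]
  rw [Finset.mul_sum, ← Finset.sum_sub_distrib]
  refine Finset.sum_congr rfl fun j _ => ?_
  ring

theorem relation_omega {n : ℕ} (ω : Fin n → ℝ → ℝ) (g : ℝ → ℝ) (z : Fin (n + 2) → ℝ)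
    (i : Fin n) :
    ∑ j : Fin (n + 2), (-1) ^ (j : ℕ) * ω i (z j) *
      Phi (Fin.snoc ω g) (fun a => z (j.succAbove a)) = 0 := by
  have h0 : Phi (Fin.snoc (Fin.snoc ω g : Fin (n + 1) → ℝ → ℝ) (ω i)) z = 0 := by
    unfold Phi
    refine Matrix.det_zero_of_row_eq (i := i.castSucc.castSucc) (j := Fin.last _) ?_ ?_
    · exact (Fin.castSucc_lt_last _).ne
    · ext b
      simp
  rw [Phi_snoc_expand] at h0
  have h1 : ∀ j : Fin (n + 2), (-1 : ℝ) ^ (n + 1 + (j : ℕ)) * ω i (z j) *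
      Phi (Fin.snoc ω g) (fun a => z (j.succAbove a)) = (-1) ^ (n + 1) *
      ((-1) ^ (j : ℕ) * ω i (z j) * Phi (Fin.snoc ω g) (fun a => z (j.succAbove a))) := by
    intro j
    rw [pow_add]; ring
  simp only [h1] at h0
  rw [← Finset.mul_sum] at h0
  exact (mul_eq_zero.mp h0).resolve_left (pow_ne_zero _ (by norm_num))

theorem relation_comb {m : ℕ} (ω : Fin (m + 1) → ℝ → ℝ) (g : ℝ → ℝ) (z : Fin (m + 3) → ℝ)
    (w : Fin m → ℝ) :
    ∑ j : Fin (m + 3), (-1) ^ (j : ℕ) * Phi ω (Fin.cons (z j) w) *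
      Phi (Fin.snoc ω g) (fun a => z (j.succAbove a)) = 0 := by
  have hu : ∀ t, Phi ω (Fin.cons t w) = ∑ i : Fin (m + 1), ω i t *
      ((-1) ^ (i : ℕ) * (Matrix.of fun (a b : Fin m) => ω (i.succAbove a) (w b)).det) := by
    intro t
    unfold Phi
    rw [Matrix.det_succ_column_zero]
    refine Finset.sum_congr rfl fun i _ => ?_
    have h : (Matrix.of fun i j => ω i ((Fin.cons t w : Fin (m + 1) → ℝ) j)).submatrix
      i.succAbove Fin.succ = Matrix.of fun (a b : Fin m) => ω (i.succAbove a) (w b) := by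
      ext a b
      simp
    rw [h]
    simp
    ring
  simp only [hu, Finset.mul_sum, Finset.sum_mul]
  rw [Finset.sum_comm]
  refine Finset.sum_eq_zero fun i _ => ?_
  have := relation_omega ω g z i
  calc _ = ((-1) ^ (i : ℕ) * (Matrix.of fun (a b : Fin m) => ω (i.succAbove a) (w b)).det) *
        ∑ j : Fin (m + 3), (-1) ^ (j : ℕ) * ω i (z j) *
      Phi (Fin.snoc ω g) (fun a => z (j.succAbove a)) := by
        rw [Finset.mul_sum]
        refine Finset.sum_congr rfl fun j _ => ?_
        ring
    _ = 0 := by rw [this, mul_zero]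

theorem Phi_cons_eq {m : ℕ} (ω : Fin (m + 1) → ℝ → ℝ) (v : Fin (m + 1) → ℝ) (q : Fin (m + 1)) :
    Phi ω (Fin.cons (v q) (fun i => v (q.succAbove i))) = (-1) ^ (q : ℕ) * Phi ω v := by
  have h : (Fin.cons (v q) (fun i => v (q.succAbove i)) : Fin (m + 1) → ℝ) =
      fun j => v (q.cycleRange.symm j) := by
    funext j
    refine Fin.cases ?_ (fun j => ?_) j
    · simp
    · simp
  rw [h]
  unfold Phi
  have := Matrix.det_permute' q.cycleRange.symm (Matrix.of fun i j => ω i (v j))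
  have h2 : (Matrix.of fun i j => ω i (v j)).submatrix id q.cycleRange.symm =
      Matrix.of fun i j => ω i (v (q.cycleRange.symm j)) := by
    ext a b
    simp
  rw [h2] at this
  rw [this]
  simp

theorem Phi_cons_zero {m : ℕ} (ω : Fin (m + 1) → ℝ → ℝ) (w : Fin m → ℝ) (i : Fin m) :
    Phi ω (Fin.cons (w i) w) = 0 := by
  unfold Phi
  refine Matrix.det_zero_of_column_eq (i := 0) (j := i.succ) ?_ ?_
  · exact (Fin.succ_ne_zero i).symm
  · intro a
    simp

theorem three_term {m : ℕ} (ω : Fin (m + 1) → ℝ → ℝ) (g : ℝ → ℝ) (I : Set ℝ)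
    (hω : IsPosChebyshev ω I) (z : Fin (m + 3) → ℝ) (hz : StrictMono z) (hzI : ∀ j, z j ∈ I)
    (k : Fin (m + 1))
    (h0 : 0 < Phi (Fin.snoc ω g) (fun a => z a.succ))
    (h1 : 0 < Phi (Fin.snoc ω g) (fun a => z a.castSucc)) :
    0 < Phi (Fin.snoc ω g) (fun a => z (k.castSucc.succ.succAbove a)) := by
  set v : Fin (m + 1) → ℝ := fun i => z i.castSucc.succ with hv
  set w : Fin m → ℝ := fun i => v (k.succAbove i) with hw
  have hvm : StrictMono v := fun a b hab => hz (by simpa using hab)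
  have hwm : StrictMono w := fun a b hab => hvm ((Fin.strictMono_succAbove k) hab)
  have hrel := relation_comb ω g z w
  rw [Fin.sum_univ_succ, Fin.sum_univ_castSucc] at hrel
  rw [Finset.sum_eq_single k] at hrel
  rotate_left
  · intro b _ hb
    obtain ⟨i, rfl⟩ := Fin.exists_succAbove_eq hb
    have : Phi ω (Fin.cons (z (k.succAbove i).castSucc.succ) w) = 0 := Phi_cons_zero ω w i
    rw [this]; ring
  · simp
  have e1 : Phi ω (Fin.cons (z k.castSucc.succ) w) = (-1) ^ (k : ℕ) * Phi ω v :=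
    Phi_cons_eq ω v k
  have e2 : Phi ω (Fin.cons (z (Fin.last (m + 1)).succ) w) =
      (-1) ^ m * Phi ω (Fin.snoc w (z (Fin.last (m + 2)))) := by
    have := Phi_cons_eq ω (Fin.snoc w (z (Fin.last (m + 2)))) (Fin.last m)
    simpa using this
  rw [e1, e2] at hrel
  have p0 : 0 < Phi ω (Fin.cons (z 0) w) := by
    apply hω
    · intro a b
      refine Fin.cases ?_ (fun a => ?_) a
      · refine Fin.cases ?_ (fun b => ?_) b
        · intro h; exact absurd h (lt_irrefl _)
        · intro _
          simpa using hz (Fin.succ_pos _)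
      · refine Fin.cases ?_ (fun b => ?_) b
        · intro h; exact absurd h (Fin.not_lt_zero _)
        · intro h
          simpa using hwm (by simpa using h)
    · intro j
      refine Fin.cases ?_ (fun j => ?_) j
      · exact hzI _
      · exact hzI _
  have p1 : 0 < Phi ω (Fin.snoc w (z (Fin.last (m + 2)))) := by
    apply hω
    · intro a b
      refine Fin.lastCases ?_ (fun a => ?_) a
      · intro h; exact absurd h (Fin.le_last _).not_gt
      · refine Fin.lastCases ?_ (fun b => ?_) b
        · intro _
          have : z (k.succAbove a).castSucc.succ < z (Fin.last (m + 2)) :=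
            hz (by rw [Fin.succ_castSucc]; exact Fin.castSucc_lt_last _)
          simpa using this
        · intro h
          simpa using hwm (by simpa using h)
    · intro j
      refine Fin.lastCases ?_ (fun j => ?_) j
      · simpa using hzI _
      · simpa using hzI _
  have pv : 0 < Phi ω v := hω v hvm (fun _ => hzI _)
  have s1 : ((-1 : ℝ) ^ (k : ℕ)) * (-1) ^ (k : ℕ) = 1 := by
    rw [← mul_pow]; simp
  have s2 : ((-1 : ℝ) ^ m) * (-1) ^ m = 1 := by
    rw [← mul_pow]; simp
  have hm2 : ((Fin.last (m + 1)).succ : Fin (m + 3)) = Fin.last (m + 2) := rfl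
  rw [hm2] at hrel
  simp only [Fin.succAbove_zero, Fin.succAbove_last, Fin.val_zero, pow_zero, one_mul,
    Fin.val_succ, Fin.val_castSucc, Fin.val_last] at hrel
  have e3 : Phi ω v * Phi (Fin.snoc ω g) (fun a => z (k.castSucc.succ.succAbove a)) =
      Phi ω (Fin.cons (z 0) w) * Phi (Fin.snoc ω g) (fun a => z a.succ) +
      Phi ω (Fin.snoc w (z (Fin.last (m + 2)))) *
        Phi (Fin.snoc ω g) (fun a => z a.castSucc) := by
    rw [pow_add, pow_add (-1 : ℝ) m 2] at hrel
    linear_combination (-1 : ℝ) * hrel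
      - (Phi ω v * Phi (Fin.snoc ω g) (fun a => z (k.castSucc.succ.succAbove a))) * s1
      + (Phi ω (Fin.snoc w (z (Fin.last (m + 2)))) *
        Phi (Fin.snoc ω g) (fun a => z a.castSucc)) * s2
  have e4 : 0 < Phi ω v * Phi (Fin.snoc ω g) (fun a => z (k.castSucc.succ.succAbove a)) := by
    rw [e3]; positivity
  exact (mul_pos_iff_of_pos_left pv).mp e4

theorem strictMono_of_consec {n : ℕ} (ι : Fin (n + 1) → ℕ) (hι : StrictMono ι) (i : Fin (n + 1)) :
    ι 0 + i ≤ ι i := by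
  induction i using Fin.induction with
  | zero => simp
  | succ i ih =>
    have := hι (Fin.castSucc_lt_succ (i := i))
    simp at *
    omega

theorem pos_all {m : ℕ} (ω : Fin (m + 1) → ℝ → ℝ) (g : ℝ → ℝ) (I : Set ℝ)
    (hω : IsPosChebyshev ω I) (N : ℕ) (y : ℕ → ℝ) (hy : StrictMono y)
    (hyI : ∀ i ≤ N, y i ∈ I)
    (hwin : ∀ a, a + (m + 1) ≤ N → 0 < Phi (Fin.snoc ω g) (fun j : Fin (m + 2) => y (a + j))) :
    ∀ s : ℕ, ∀ ι : Fin (m + 2) → ℕ, StrictMono ι → ι (Fin.last _) ≤ N →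
      ι (Fin.last _) ≤ ι 0 + s → 0 < Phi (Fin.snoc ω g) (fun j => y (ι j)) := by
  intro s
  induction s with
  | zero =>
    intro ι hι _ h
    have := strictMono_of_consec ι hι (Fin.last _)
    simp at this
    omega
  | succ s ih =>
    intro ι hι hN hs
    by_cases hc : ∀ i : Fin (m + 1), ι i.succ = ι i.castSucc + 1
    · have : ∀ j, ι j = ι 0 + j := by
        intro j
        induction j using Fin.induction with
        | zero => simp
        | succ i ih => rw [hc, ih]; simp; omega
      have hl := this (Fin.last _)
      simp at hl
      have := hwin (ι 0) (by omega)
      convert this using 4 with j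
      rename_i h; exact h j
    · push Not at hc
      obtain ⟨k, hk⟩ := hc
      have hlt := hι (Fin.castSucc_lt_succ (i := k))
      set z : Fin (m + 3) → ℕ := Fin.insertNth k.castSucc.succ (ι k.castSucc + 1) ι with hz
      have hzm : StrictMono z := by
        intro a b
        refine Fin.succAboveCases k.castSucc.succ ?_ (fun a => ?_) a
        · refine Fin.succAboveCases k.castSucc.succ ?_ (fun b => ?_) b
          · intro h; exact absurd h (lt_irrefl _)
          · intro h
            rw [Fin.lt_succAbove_iff_le_castSucc, Fin.succ_castSucc,
              Fin.castSucc_le_castSucc_iff] at h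
            have := hι.monotone h
            simp only [hz, Fin.insertNth_apply_same, Fin.insertNth_apply_succAbove]
            omega
        · refine Fin.succAboveCases k.castSucc.succ ?_ (fun b => ?_) b
          · intro h
            rw [Fin.succAbove_lt_iff_castSucc_lt, Fin.castSucc_lt_succ_iff] at h
            have := hι.monotone h
            simp only [hz, Fin.insertNth_apply_same, Fin.insertNth_apply_succAbove]
            omega
          · intro h
            rw [(Fin.strictMono_succAbove _).lt_iff_lt] at h
            simpa only [hz, Fin.insertNth_apply_succAbove] using hι h
      have hzk : ∀ a, z (k.castSucc.succ.succAbove a) = ι a := by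
        intro a
        simp [hz]
      have hz0 : z 0 = ι 0 := by
        rw [← hzk 0]; simp
      have hzl : z (Fin.last _) = ι (Fin.last _) := by
        rw [← hzk (Fin.last _)]
        congr 1
        rw [Fin.succAbove_of_le_castSucc]
        · rfl
        · rw [Fin.succ_castSucc, Fin.castSucc_le_castSucc_iff]
          exact Fin.le_last _
      have hzN : ∀ j, z j ≤ N := fun j => (hzm.monotone (Fin.le_last j)).trans (hzl ▸ hN)
      have := three_term ω g I hω (fun j => y (z j)) (hy.comp hzm) (fun j => hyI _ (hzN j)) k
        (ih (fun a => z a.succ) (fun a b hab => hzm (by simpa using hab)) (hzN _) (by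
          have : z 0 < z (Fin.succ 0) := hzm (Fin.succ_pos 0)
          have e : z (Fin.last (m + 1)).succ = ι (Fin.last _) := hzl
          omega))
        (ih (fun a => z a.castSucc) (fun a b hab => hzm (by simpa using hab)) (hzN _) (by
          have : z (Fin.last (m + 1)).castSucc < z (Fin.last (m + 2)) :=
            hzm (Fin.castSucc_lt_last _)
          have e : z (Fin.castSucc 0) = ι 0 := hz0
          omega))
      simpa only [hzk] using this

theorem jpts_one {n : ℕ} (hn : 0 < n) (x y : ℝ) (j : Fin (n + 1)) :
    jpts (fun _ : Fin n => (1 : ℝ)) x y j = x + j * ((y - x) / n) := by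
  have hp : ∀ j : Fin (n + 1), psum (fun _ : Fin n => (1 : ℝ)) j = j := by
    intro j
    unfold psum
    rw [Finset.sum_const, nsmul_eq_mul, mul_one, Fin.card_filter_val_lt]
    simp
    omega
  unfold jpts
  rw [hp, hp]
  have : (n : ℝ) ≠ 0 := by positivity
  simp
  field_simp
  ring

theorem step {n : ℕ} (hn : 0 < n) (I : Set ℝ) (hI : I.OrdConnected)
    (ω : Fin n → ℝ → ℝ) (ω' : ℝ → ℝ)
    (hω : IsPosChebyshev ω I) (hωs : IsPosChebyshev (Fin.snoc ω ω') I)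
    (f : ℝ → ℝ) (x y : ℝ) (hx : x ∈ I) (hy : y ∈ I) (hxy : x < y) :
    ∃ xx yy, x ≤ xx ∧ yy ≤ y ∧ yy - xx = (y - x) / 2 ∧
      divDiff ω ω' f (jpts (fun _ => (1 : ℝ)) xx yy) ≤
        divDiff ω ω' f (jpts (fun _ => (1 : ℝ)) x y) := by
  obtain ⟨m, rfl⟩ : ∃ m, n = m + 1 := ⟨n - 1, by omega⟩
  by_contra! hcon
  set c := divDiff ω ω' f (jpts (fun _ => (1 : ℝ)) x y) with hc
  set h : ℝ := (y - x) / (2 * ((m + 1 : ℕ) : ℝ)) with hh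
  have hm : (0 : ℝ) < ((m + 1 : ℕ) : ℝ) := by positivity
  have hhpos : 0 < h := by have := sub_pos.mpr hxy; positivity
  have hyh : y = x + 2 * ((m + 1 : ℕ) : ℝ) * h := by rw [hh]; field_simp; ring
  have hYm : StrictMono (fun i : ℕ => x + i * h) := by
    intro a b hab
    have : (a : ℝ) < b := by exact_mod_cast hab
    simp only []
    nlinarith
  have hYI : ∀ i ≤ 2 * (m + 1), x + (i : ℕ) * h ∈ I := by
    intro i hi
    refine hI.out hx hy ⟨?_, ?_⟩
    · have : 0 ≤ (i : ℝ) * h := by positivity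
      linarith
    · rw [hyh]
      have : (i : ℝ) ≤ 2 * ((m + 1 : ℕ) : ℝ) := by exact_mod_cast hi
      nlinarith
  have key := pos_all ω (fun t => f t - c * ω' t) I hω (2 * (m + 1)) (fun i : ℕ => x + i * h)
    hYm hYI (by
      intro a ha
      have hmem : ∀ j : Fin (m + 2), a + (j : ℕ) ≤ 2 * (m + 1) := fun j => by omega
      have hpos : 0 < Phi (Fin.snoc ω ω') (fun j : Fin (m + 2) => x + ((a + j : ℕ) : ℝ) * h) :=
        hωs _ (fun i j hij => hYm (by simpa using hij)) (fun j => hYI _ (hmem j))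
      have ha' : (a : ℝ) + ((m + 1 : ℕ) : ℝ) ≤ 2 * ((m + 1 : ℕ) : ℝ) := by exact_mod_cast ha
      have h1 := hcon (x + a * h) (x + (a + ((m + 1 : ℕ) : ℝ)) * h)
        (by have : 0 ≤ (a : ℝ) * h := by positivity
            linarith) (by rw [hyh]; nlinarith) (by rw [hyh]; ring)
      have e : jpts (fun _ : Fin (m + 1) => (1 : ℝ)) (x + a * h)
          (x + (a + ((m + 1 : ℕ) : ℝ)) * h) =
          fun j : Fin (m + 2) => x + ((a + j : ℕ) : ℝ) * h := by
        funext j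
        rw [jpts_one hn]
        push_cast at hm ⊢
        field_simp
        ring
      rw [e, divDiff, lt_div_iff₀ hpos] at h1
      rw [Phi_snoc_sub]
      linarith) (2 * (m + 1)) (fun j => 2 * (j : ℕ)) (fun i j hij => by
        have : (i : ℕ) < j := hij
        simp only []; omega) (by simp) (by simp)
  have e : jpts (fun _ : Fin (m + 1) => (1 : ℝ)) x y =
      fun j : Fin (m + 2) => x + ((2 * (j : ℕ) : ℕ) : ℝ) * h := by
    funext j
    rw [jpts_one hn, hyh]
    push_cast at hm ⊢
    field_simp
    ring
  have hpos : 0 < Phi (Fin.snoc ω ω') (fun j : Fin (m + 2) => x + ((2 * (j : ℕ) : ℕ) : ℝ) * h) :=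
    hωs _ (fun i j hij => hYm (by
      have : (i : ℕ) < j := hij
      omega)) (fun j => hYI _ (by omega))
  rw [Phi_snoc_sub, hc, e, divDiff, div_mul_cancel₀ _ hpos.ne'] at key
  simp at key

/-- **Theorem 7 (mean value inequality for Jensen type divided differences).**
For every `x < y` in `I` there is a point `p ∈ [x,y]` with
`[x, ((n−1)x+y)/n, …, (x+(n−1)y)/n, y; f]_{ω*} ≥ D̲_{(𝟏ₙ,ω*)} f(p)`. -/
theorem jensen_divDiff_ge_dinghas_at_some_point
    (n : ℕ) (hn : 0 < n) (I : Set ℝ) (hI : I.OrdConnected)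
    (hne : ∃ a ∈ I, ∃ b ∈ I, a < b)
    (ω : Fin n → ℝ → ℝ) (ω' : ℝ → ℝ)
    (hω : IsPosChebyshev ω I) (hωs : IsPosChebyshev (Fin.snoc ω ω') I)
    (f : ℝ → ℝ) :
    ∀ x ∈ I, ∀ y ∈ I, x < y →
      ∃ p ∈ Set.Icc x y,
        dinghasT ω ω' (fun _ => (1 : ℝ)) f I p ≤
          (divDiff ω ω' f (jpts (fun _ => (1 : ℝ)) x y) : EReal) := by
  intro x hx y hy hxy
  set c := divDiff ω ω' f (jpts (fun _ => (1 : ℝ)) x y) with hc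
  let P : ℝ × ℝ → Prop := fun q => x ≤ q.1 ∧ q.2 ≤ y ∧ q.1 < q.2 ∧
    divDiff ω ω' f (jpts (fun _ => (1 : ℝ)) q.1 q.2) ≤ c
  have hmem : ∀ t, x ≤ t → t ≤ y → t ∈ I := fun t h1 h2 => hI.out hx hy ⟨h1, h2⟩
  have hstep : ∀ q : {q // P q}, ∃ r : {q // P q}, q.1.1 ≤ r.1.1 ∧ r.1.2 ≤ q.1.2 ∧
      r.1.2 - r.1.1 = (q.1.2 - q.1.1) / 2 := by
    rintro ⟨⟨a, b⟩, h1, h2, h3, h4⟩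
    simp only [] at h1 h2 h3 h4
    obtain ⟨aa, bb, g1, g2, g3, g4⟩ := step hn I hI ω ω' hω hωs f a b
      (hmem a h1 (by linarith)) (hmem b (by linarith) h2) h3
    exact ⟨⟨(aa, bb), by simp only []; linarith, by simp only []; linarith,
      by simp only []; linarith, g4.trans h4⟩, g1, g2, g3⟩
  choose F hF1 hF2 hF3 using hstep
  let q : ℕ → {q // P q} := fun k => F^[k] ⟨(x, y), le_rfl, le_rfl, hxy, le_rfl⟩
  have hq : ∀ k, q (k + 1) = F (q k) := fun k => Function.iterate_succ_apply' _ _ _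
  have hmono : Monotone (fun k => (q k).1.1) := monotone_nat_of_le_succ fun k => by
    rw [hq]; exact hF1 _
  have hanti : Antitone (fun k => (q k).1.2) := antitone_nat_of_succ_le fun k => by
    rw [hq]; exact hF2 _
  have hlen : ∀ k, (q k).1.2 - (q k).1.1 = (y - x) * (1 / 2) ^ k := by
    intro k
    induction k with
    | zero => simp [q]
    | succ k ih => rw [hq, hF3, ih, pow_succ]; ring
  have hle : ∀ i j, (q i).1.1 ≤ (q j).1.2 := by
    intro i j
    have h1 := hmono (le_max_left i j)
    have h2 := hanti (le_max_right i j)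
    have h3 := (q (max i j)).2.2.2.1
    simp only [] at h1 h2
    linarith
  have hbdd : BddAbove (Set.range fun k => (q k).1.1) := ⟨(q 0).1.2, by
    rintro _ ⟨k, rfl⟩; exact hle k 0⟩
  set p := ⨆ k, (q k).1.1 with hp
  have hp1 : ∀ k, (q k).1.1 ≤ p := fun k => le_ciSup hbdd k
  have hp2 : ∀ k, p ≤ (q k).1.2 := fun k => ciSup_le fun i => hle i k
  refine ⟨p, ⟨hp1 0, hp2 0⟩, ?_⟩
  unfold dinghasT
  refine Filter.liminf_le_of_frequently_le' ?_
  rw [Filter.frequently_iff]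
  intro U hU
  rw [Filter.mem_biInf_of_directed] at hU
  · obtain ⟨δ, hδ, hU⟩ := hU
    rw [Filter.mem_principal] at hU
    have hδ' : (0 : ℝ) < δ / (y - x) := div_pos hδ (by linarith)
    obtain ⟨k, hk⟩ := exists_pow_lt_of_lt_one hδ' (by norm_num : (1 / 2 : ℝ) < 1)
    have hP := (q k).2
    refine ⟨(q k).1, hU ⟨hmem _ hP.1 (hP.2.2.1.le.trans hP.2.1),
      hmem _ (hP.1.trans hP.2.2.1.le) hP.2.1, hP.2.2.1, hp1 k, hp2 k, ?_⟩, ?_⟩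
    · rw [hlen]
      rw [lt_div_iff₀ (by linarith)] at hk
      linarith
    · exact_mod_cast hP.2.2.2
  · intro a ha b hb
    refine ⟨min a b, Set.mem_Ioi.mpr (lt_min ha hb), ?_, ?_⟩
    · simp only [ge_iff_le, Filter.le_principal_iff, Order.Preimage]
      refine Filter.mem_principal.mpr ?_
      rintro r ⟨h1, h2, h3, h4, h5, h6⟩
      exact ⟨h1, h2, h3, h4, h5, h6.trans_le (min_le_left _ _)⟩
    · simp only [ge_iff_le, Filter.le_principal_iff, Order.Preimage]
      refine Filter.mem_principal.mpr ?_
      rintro r ⟨h1, h2, h3, h4, h5, h6⟩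
      exact ⟨h1, h2, h3, h4, h5, h6.trans_le (min_le_right _ _)⟩
  · exact ⟨1, by simp⟩
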